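/- For every fixed ε > 0 there is a constant K = K(ε) such that for all integers n ≥ 1, | |C(n)|² − 64n² | ≤ K·n^{1+ε}. -/

import Mathlib

open Real Set Filter

/-- The open interior of the box `B_{i,j}(n) = [i/n,(i+1)/n] × [j/n,(j+1)/n]`. -/
def boxInt (n : ℕ) (i j : ℤ) : Set (ℝ × ℝ) :=
  {p | (i : ℝ) / n < p.1 ∧ p.1 < ((i : ℝ) + 1) / n ∧
       (j : ℝ) / n < p.2 ∧ p.2 < ((j : ℝ) + 1) / n}

/-- The plane unit circle `C`. -/
def unitCircle : Set (ℝ × ℝ) := {p | p.1 ^ 2 + p.2 ^ 2 = 1}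

/-- The approximation `X(n)` of a set `X ⊆ ℝ²`: the boxes (encoded by their index
pairs `(i,j) ∈ ℤ²`) whose open interior intersects `X`. -/
def approx (n : ℕ) (X : Set (ℝ × ℝ)) : Set (ℤ × ℤ) :=
  {ij | (boxInt n ij.1 ij.2 ∩ X).Nonempty}

/-!
In the open first quadrant the circle of radius `n` meets each of the `2 * n - 1` diagonals
`x - y = c`, `|c| < n`, of the grid of unit squares exactly once, either inside a square or at a
lattice point. If `P` is the number of these lattice points, the four quadrants together therefore
contain `8 * n - 4 * (P + 1)` boxes, and the claim becomes `P = O(n ^ ε)`.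

A lattice point on the circle is a Gaussian integer of norm `n ^ 2`, hence a divisor of `n ^ 2`. The
number `τ` of divisors is submultiplicative, so `τ x` is compared with `N x ^ ε` prime by prime:
`τ (p ^ k) ≤ (k + 1) * τ 1` is at most a constant times `N p ^ (k * ε)`, and no constant is needed
when `N p ^ ε ≥ 2 * τ 1`, which excludes only finitely many primes `p`.
-/

section DivisorCount

/-- The number of divisors of `x`, with associated divisors counted separately; it is `0` if `x` has
infinitely many divisors. -/
noncomputable def divisorCount {M : Type*} [Monoid M] (x : M) : ℕ := {d | d ∣ x}.ncard

lemma divisorCount_mul_le {M : Type*} [CommMonoid M] [DecompositionMonoid M] (x y : M) :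
    divisorCount (x * y) ≤ divisorCount x * divisorCount y := by
  rcases {d | d ∣ x * y}.infinite_or_finite with hinf | hfin
  · simp [divisorCount, hinf.ncard]
  have hx : {d | d ∣ x}.Finite := hfin.subset fun d hd ↦ hd.mul_right y
  have hy : {d | d ∣ y}.Finite := hfin.subset fun d hd ↦ hd.mul_left x
  have hsub : {d | d ∣ x * y} ⊆ (fun q : M × M ↦ q.1 * q.2) '' ({d | d ∣ x} ×ˢ {d | d ∣ y}) := by
    intro d hd
    obtain ⟨a, b, ha, hb, rfl⟩ := exists_dvd_and_dvd_of_dvd_mul hd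
    exact ⟨(a, b), ⟨ha, hb⟩, rfl⟩
  calc divisorCount (x * y)
      ≤ ((fun q : M × M ↦ q.1 * q.2) '' ({d | d ∣ x} ×ˢ {d | d ∣ y})).ncard :=
        ncard_le_ncard hsub ((hx.prod hy).image _)
    _ ≤ ({d | d ∣ x} ×ˢ {d | d ∣ y}).ncard := ncard_image_le (hx.prod hy)
    _ = divisorCount x * divisorCount y := ncard_prod

lemma divisorCount_of_isUnit {M : Type*} [CommMonoid M] {x : M} (hx : IsUnit x) :
    divisorCount x = divisorCount (1 : M) := by
  simp only [divisorCount, (associated_one_iff_isUnit.2 hx).dvd_iff_dvd_right]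

lemma divisorCount_prime_pow_le {M : Type*} [CommMonoidWithZero M] [IsCancelMulZero M] {p : M}
    (hp : Prime p) (k : ℕ) : divisorCount (p ^ k) ≤ (k + 1) * divisorCount (1 : M) := by
  rcases {d | d ∣ p ^ k}.infinite_or_finite with hinf | hfin
  · simp [divisorCount, hinf.ncard]
  have hone : {d : M | d ∣ 1}.Finite := hfin.subset fun d hd ↦ hd.trans (one_dvd _)
  have hprod : (Iic k ×ˢ {d : M | d ∣ 1}).Finite := (finite_Iic k).prod hone
  have hsub : {d | d ∣ p ^ k} ⊆ (fun q : ℕ × M ↦ p ^ q.1 * q.2) '' (Iic k ×ˢ {d | d ∣ 1}) := by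
    intro d hd
    obtain ⟨i, hi, hdi⟩ := (dvd_prime_pow hp k).1 hd
    obtain ⟨u, rfl⟩ := hdi.symm
    exact ⟨(i, u), ⟨hi, u.isUnit.dvd⟩, rfl⟩
  calc divisorCount (p ^ k)
      ≤ ((fun q : ℕ × M ↦ p ^ q.1 * q.2) '' (Iic k ×ˢ {d | d ∣ 1})).ncard :=
        ncard_le_ncard hsub (hprod.image _)
    _ ≤ (Iic k ×ˢ {d : M | d ∣ 1}).ncard := ncard_image_le hprod
    _ = (k + 1) * divisorCount (1 : M) := by
        rw [ncard_prod, divisorCount, ← Finset.coe_Iic, ncard_coe_finset, Nat.card_Iic]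

end DivisorCount

section DivisorBound

variable {M : Type*} [CommMonoidWithZero M]

lemma two_le_map_of_northcott [IsCancelMulZero M] (N : M →* ℕ) [Northcott N] {x : M} (hx₀ : x ≠ 0)
    (hx : ¬IsUnit x) : 2 ≤ N x := by
  by_contra! hlt
  refine infinite_of_injective_forall_mem (pow_injective_of_not_isUnit hx hx₀) (fun k ↦ ?_)
    (Northcott.finite_le (h := N) 1)
  simpa using pow_le_one₀ (n := k) (Nat.zero_le _) (Nat.lt_succ_iff.1 hlt)

lemma map_pos_of_northcott [IsCancelMulZero M] (N : M →* ℕ) [Northcott N] {x : M} (hx₀ : x ≠ 0) :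
    0 < N x := by
  by_cases hx : IsUnit x
  · exact Nat.pos_of_ne_zero (hx.map N).ne_zero
  · exact two_pos.trans_le (two_le_map_of_northcott N hx₀ hx)

lemma finite_setOf_dvd_of_northcott [IsCancelMulZero M] (N : M →* ℕ) [Northcott N] {x : M}
    (hx₀ : x ≠ 0) : {d | d ∣ x}.Finite :=
  (Northcott.finite_le (h := N) (N x)).subset fun _ hd ↦
    Nat.le_of_dvd (map_pos_of_northcott N hx₀) (map_dvd N hd)

lemma succ_le_mul_pow {b : ℝ} (hb : 1 < b) (k : ℕ) : (k + 1 : ℝ) ≤ b / (b - 1) * b ^ k := by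
  have hbernoulli := one_add_mul_sub_le_pow (by linarith : -1 ≤ b) (k + 1)
  rw [div_mul_eq_mul_div, le_div_iff₀ (sub_pos.2 hb), ← pow_succ']
  push_cast at hbernoulli
  linarith

variable [UniqueFactorizationMonoid M] (N : M →* ℕ) {ε : ℝ}

lemma divisorCount_le_of_forall_prime_dvd {x : M} (hx₀ : x ≠ 0)
    (hx : ∀ p, Prime p → p ∣ x → 2 * (divisorCount (1 : M) : ℝ) ≤ (N p : ℝ) ^ ε) :
    (divisorCount x : ℝ) ≤ divisorCount (1 : M) * (N x : ℝ) ^ ε := by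
  induction x using UniqueFactorizationMonoid.induction_on_prime with
  | h₁ => exact absurd rfl hx₀
  | h₂ x hunit => simp [divisorCount_of_isUnit hunit, Nat.isUnit_iff.1 (hunit.map N)]
  | h₃ x p hx₀' hp ih =>
    have hpow : (divisorCount p : ℝ) ≤ (N p : ℝ) ^ ε := by
      refine le_trans ?_ (hx p hp (dvd_mul_right p x))
      exact_mod_cast (by simpa [one_add_one_eq_two] using divisorCount_prime_pow_le hp 1)
    calc (divisorCount (p * x) : ℝ)
        ≤ divisorCount p * divisorCount x := mod_cast divisorCount_mul_le p x
      _ ≤ (N p : ℝ) ^ ε * (divisorCount (1 : M) * (N x : ℝ) ^ ε) := by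
          gcongr
          exact ih hx₀' fun q hq hqx ↦ hx q hq (hqx.mul_left p)
      _ = divisorCount (1 : M) * (N (p * x) : ℝ) ^ ε := by
          rw [map_mul, Nat.cast_mul, mul_rpow (Nat.cast_nonneg _) (Nat.cast_nonneg _)]
          ring

variable [Northcott N]

lemma exists_divisorCount_prime_pow_le (hε : 0 < ε) {p : M} (hp : Prime p) :
    ∃ K : ℝ, 0 ≤ K ∧ ∀ k : ℕ, (divisorCount (p ^ k) : ℝ) ≤ K * (N (p ^ k) : ℝ) ^ ε := by
  set b : ℝ := (N p : ℝ) ^ ε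
  have hb : 1 < b :=
    one_lt_rpow (mod_cast two_le_map_of_northcott N hp.ne_zero hp.not_isUnit) hε
  refine ⟨b / (b - 1) * divisorCount (1 : M),
    mul_nonneg (div_nonneg (by linarith) (by linarith)) (Nat.cast_nonneg _), fun k ↦ ?_⟩
  have hpow : (N (p ^ k) : ℝ) ^ ε = b ^ k := by
    rw [map_pow, Nat.cast_pow, ← rpow_natCast_mul (Nat.cast_nonneg _), mul_comm,
      rpow_mul_natCast (Nat.cast_nonneg _)]
  calc (divisorCount (p ^ k) : ℝ)
      ≤ (k + 1) * divisorCount (1 : M) := mod_cast divisorCount_prime_pow_le hp k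
    _ ≤ b / (b - 1) * b ^ k * divisorCount (1 : M) := by gcongr; exact succ_le_mul_pow hb k
    _ = b / (b - 1) * divisorCount (1 : M) * (N (p ^ k) : ℝ) ^ ε := by rw [hpow]; ring

lemma exists_divisorCount_le_of_forall_prime_dvd_mem_or (hε : 0 < ε) (S : Finset M) :
    ∃ K : ℝ, 0 ≤ K ∧ ∀ x : M, x ≠ 0 →
      (∀ p, Prime p → p ∣ x → p ∈ S ∨ 2 * (divisorCount (1 : M) : ℝ) ≤ (N p : ℝ) ^ ε) →
      (divisorCount x : ℝ) ≤ K * (N x : ℝ) ^ ε := by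
  classical
  induction S using Finset.induction_on with
  | empty =>
    refine ⟨divisorCount (1 : M), Nat.cast_nonneg _, fun x hx₀ hx ↦ ?_⟩
    exact divisorCount_le_of_forall_prime_dvd N hx₀ (by simpa using hx)
  | insert p S _ ih =>
    obtain ⟨K, hK₀, hK⟩ := ih
    by_cases hp : Prime p
    · obtain ⟨Kp, hKp₀, hKp⟩ := exists_divisorCount_prime_pow_le N hε hp
      refine ⟨Kp * K, mul_nonneg hKp₀ hK₀, fun x hx₀ hx ↦ ?_⟩
      obtain ⟨y, hxy, hpy⟩ :=
        (FiniteMultiplicity.of_prime_left hp hx₀).exists_eq_pow_mul_and_not_dvd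
      generalize multiplicity p x = k at hxy
      subst hxy
      have hy : (divisorCount y : ℝ) ≤ K * (N y : ℝ) ^ ε := by
        refine hK y (right_ne_zero_of_mul hx₀) fun q hq hqy ↦ ?_
        have hqp : q ≠ p := fun h ↦ hpy (h ▸ hqy)
        simpa [hqp] using hx q hq (hqy.mul_left _)
      calc (divisorCount (p ^ k * y) : ℝ)
          ≤ divisorCount (p ^ k) * divisorCount y := mod_cast divisorCount_mul_le _ _
        _ ≤ Kp * (N (p ^ k) : ℝ) ^ ε * (K * (N y : ℝ) ^ ε) := by gcongr; exact hKp k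
        _ = Kp * K * (N (p ^ k * y) : ℝ) ^ ε := by
            rw [map_mul, Nat.cast_mul, mul_rpow (Nat.cast_nonneg _) (Nat.cast_nonneg _)]
            ring
    · refine ⟨K, hK₀, fun x hx₀ hx ↦ hK x hx₀ fun q hq hqx ↦ ?_⟩
      have hqp : q ≠ p := fun h ↦ hp (h ▸ hq)
      simpa [hqp] using hx q hq hqx

theorem exists_divisorCount_le_mul_rpow (hε : 0 < ε) :
    ∃ K : ℝ, ∀ x : M, x ≠ 0 → (divisorCount x : ℝ) ≤ K * (N x : ℝ) ^ ε := by
  obtain ⟨B, hB⟩ : ∃ B : ℕ, ∀ n ≥ B, 2 * (divisorCount (1 : M) : ℝ) ≤ (n : ℝ) ^ ε :=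
    eventually_atTop.1 <|
      ((tendsto_rpow_atTop hε).comp tendsto_natCast_atTop_atTop).eventually_ge_atTop _
  obtain ⟨K, -, hK⟩ := exists_divisorCount_le_of_forall_prime_dvd_mem_or N hε
    (Northcott.finite_le (h := N) B).toFinset
  refine ⟨K, fun x hx₀ ↦ hK x hx₀ fun p _ _ ↦ ?_⟩
  rw [Finite.mem_toFinset]
  exact (le_total (N p) B).imp id (hB _)

end DivisorBound

section GaussianInt

/-- The norm `z ↦ |z|²` of the Gaussian integers as a multiplicative map into `ℕ`. -/
def gaussianNorm : GaussianInt →* ℕ := Int.natAbsHom.toMonoidHom.comp Zsqrtd.normMonoidHom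

lemma gaussianNorm_eq (z : GaussianInt) : (gaussianNorm z : ℤ) = z.re ^ 2 + z.im ^ 2 := by
  trans z.norm
  · exact GaussianInt.abs_natCast_norm z
  · rw [Zsqrtd.norm_def]; ring

lemma gaussianNorm_natCast (n : ℕ) : gaussianNorm n = n ^ 2 := by
  zify
  simp [gaussianNorm_eq]

lemma dvd_gaussianNorm (z : GaussianInt) : z ∣ (gaussianNorm z : GaussianInt) :=
  ⟨star z, by rw [← Zsqrtd.norm_eq_mul_conj]; exact GaussianInt.natCast_natAbs_norm z⟩

instance northcott_gaussianNorm : Northcott gaussianNorm where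
  finite_le B := by
    refine Finite.of_finite_image (f := fun z : GaussianInt ↦ (z.re, z.im))
      (((finite_Icc (-B : ℤ) B).prod (finite_Icc (-B : ℤ) B)).subset ?_)
      fun z _ w _ h ↦ Zsqrtd.ext (congrArg Prod.fst h) (congrArg Prod.snd h)
    rintro _ ⟨z, hz, rfl⟩
    have hnorm : z.re ^ 2 + z.im ^ 2 ≤ B := by
      rw [← gaussianNorm_eq]; exact_mod_cast hz
    refine ⟨?_, ?_⟩ <;> constructor <;> dsimp only <;> nlinarith [sq_nonneg z.re, sq_nonneg z.im]

lemma natCast_sq_rpow_half (n : ℕ) (ε : ℝ) : ((n ^ 2 : ℕ) : ℝ) ^ (ε / 2) = (n : ℝ) ^ ε := by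
  rw [Nat.cast_pow, ← rpow_natCast_mul n.cast_nonneg, Nat.cast_two, mul_div_cancel₀ ε two_ne_zero]

theorem exists_ncard_gaussianNorm_eq_le_mul_rpow {ε : ℝ} (hε : 0 < ε) :
    ∃ K : ℝ, ∀ m : ℕ, m ≠ 0 → ({z | gaussianNorm z = m}.ncard : ℝ) ≤ K * (m : ℝ) ^ ε := by
  obtain ⟨K, hK⟩ := exists_divisorCount_le_mul_rpow gaussianNorm (half_pos hε)
  refine ⟨K, fun m hm ↦ ?_⟩
  have hm' : (m : GaussianInt) ≠ 0 := mod_cast hm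
  have hsub : {z | gaussianNorm z = m} ⊆ {d | d ∣ (m : GaussianInt)} := by
    rintro z rfl
    exact dvd_gaussianNorm z
  calc ({z | gaussianNorm z = m}.ncard : ℝ)
      ≤ divisorCount (m : GaussianInt) :=
        mod_cast ncard_le_ncard hsub (finite_setOf_dvd_of_northcott gaussianNorm hm')
    _ ≤ K * (gaussianNorm (m : GaussianInt) : ℝ) ^ (ε / 2) := hK _ hm'
    _ = K * (m : ℝ) ^ ε := by
        rw [gaussianNorm_natCast, natCast_sq_rpow_half]

end GaussianInt

section Quadrant

/-- The corners `(a, b) ∈ ℕ²` of the unit squares `[a, a + 1] × [b, b + 1]` whose interior meets the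
circle `x² + y² = m`. -/
def quadrantBoxes (m : ℕ) : Set (ℕ × ℕ) :=
  {q | q.1 ^ 2 + q.2 ^ 2 < m ∧ m < (q.1 + 1) ^ 2 + (q.2 + 1) ^ 2}

/-- The lattice points with positive coordinates on the circle `x² + y² = m`, each encoded by the
lower left neighbour `(a, b)` of the point `(a + 1, b + 1)`. -/
def quadrantPoints (m : ℕ) : Set (ℕ × ℕ) :=
  {q | (q.1 + 1) ^ 2 + (q.2 + 1) ^ 2 = m}

lemma quadrantBoxes_union_quadrantPoints (m : ℕ) : quadrantBoxes m ∪ quadrantPoints m =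
    {q | q.1 ^ 2 + q.2 ^ 2 < m ∧ m ≤ (q.1 + 1) ^ 2 + (q.2 + 1) ^ 2} := by
  ext ⟨a, b⟩
  have hlt : a ^ 2 + b ^ 2 < (a + 1) ^ 2 + (b + 1) ^ 2 := by gcongr <;> simp
  simp only [quadrantBoxes, quadrantPoints, mem_union, mem_ofPred_eq]
  omega

lemma disjoint_quadrantBoxes_quadrantPoints (m : ℕ) :
    Disjoint (quadrantBoxes m) (quadrantPoints m) :=
  disjoint_left.2 fun _ hbox hpoint ↦ hbox.2.ne' hpoint

lemma bijOn_sub_quadrantBoxes_union_quadrantPoints (m : ℕ) :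
    BijOn (fun q : ℕ × ℕ ↦ (q.1 : ℤ) - q.2) (quadrantBoxes m ∪ quadrantPoints m)
      {c | c ^ 2 < (m : ℤ)} := by
  rw [quadrantBoxes_union_quadrantPoints]
  refine ⟨?_, ?_, ?_⟩
  · rintro ⟨a, b⟩ ⟨hlt, -⟩
    zify at hlt
    simp only [mem_ofPred_eq]
    nlinarith [mul_nonneg (Int.natCast_nonneg a) (Int.natCast_nonneg b)]
  · have hnot_lt {a b a' b' : ℕ} (hle : m ≤ (a + 1) ^ 2 + (b + 1) ^ 2)
        (hlt : a' ^ 2 + b' ^ 2 < m) (hsub : (a : ℤ) - b = a' - b') : ¬a < a' := by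
      intro haa'
      have hbb' : b < b' := by omega
      have : (a + 1) ^ 2 + (b + 1) ^ 2 ≤ a' ^ 2 + b' ^ 2 := by gcongr <;> omega
      omega
    rintro ⟨a, b⟩ ⟨hlt, hle⟩ ⟨a', b'⟩ ⟨hlt', hle'⟩ hsub
    have hnot_lt_fst := hnot_lt hle hlt' hsub
    have hnot_gt_fst := hnot_lt hle' hlt hsub.symm
    simp only at hsub
    ext <;> simp only <;> omega
  · intro c hc
    have hexists : ∃ k, m ≤ (c.toNat + k + 1) ^ 2 + ((-c).toNat + k + 1) ^ 2 :=
      ⟨m, (Nat.le_self_pow two_ne_zero m).trans <| le_add_right <| by gcongr; omega⟩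
    refine ⟨(c.toNat + Nat.find hexists, (-c).toNat + Nat.find hexists),
      ⟨?_, Nat.find_spec hexists⟩, by simp⟩
    rcases hk : Nat.find hexists with _ | k
    · zify
      rcases le_total 0 c with h | h <;> simpa [h] using hc
    · exact not_le.1 (Nat.find_min hexists (hk ▸ k.lt_succ_self))

lemma ncard_quadrantBoxes_add_ncard_quadrantPoints (m : ℕ) :
    (quadrantBoxes m).ncard + (quadrantPoints m).ncard = {c : ℤ | c ^ 2 < m}.ncard := by
  have hbij := bijOn_sub_quadrantBoxes_union_quadrantPoints m
  have hfin : {c : ℤ | c ^ 2 < m}.Finite := by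
    refine (finite_Ioo (-m : ℤ) m).subset fun c hc ↦ abs_lt.1 ?_
    rw [mem_ofPred_eq] at hc
    rw [← Int.natCast_natAbs]
    exact (Int.natAbs_le_self_sq c).trans_lt hc
  have hunion := hbij.finite_iff_finite.2 hfin
  rw [← ncard_union_eq (disjoint_quadrantBoxes_quadrantPoints m) (hunion.subset subset_union_left)
    (hunion.subset subset_union_right), ← hbij.image_eq, hbij.injOn.ncard_image]

lemma ncard_setOf_sq_lt_sq (n : ℕ) : {c : ℤ | c ^ 2 < (n : ℤ) ^ 2}.ncard = 2 * n - 1 := by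
  have hIoo : {c : ℤ | c ^ 2 < (n : ℤ) ^ 2} = Finset.Ioo (-n : ℤ) n := by
    ext c
    simp [sq_lt_sq, abs_lt]
  rw [hIoo, ncard_coe_finset, Int.card_Ioo]
  omega

lemma ncard_quadrantPoints_le (m : ℕ) :
    (quadrantPoints m).ncard ≤ {z | gaussianNorm z = m}.ncard := by
  refine ncard_le_ncard_of_injOn (fun q ↦ (⟨q.1 + 1, q.2 + 1⟩ : GaussianInt)) ?_ ?_
    ((Northcott.finite_le (h := gaussianNorm) m).subset fun _ hz ↦ hz.le)
  · intro q (hq : (q.1 + 1) ^ 2 + (q.2 + 1) ^ 2 = m)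
    zify at hq
    exact Int.natCast_inj.1 ((gaussianNorm_eq _).trans hq)
  · intro q _ q' _ h
    simpa [Zsqrtd.ext_iff, Prod.ext_iff] using h

lemma exists_ncard_quadrantPoints_le_mul_rpow {ε : ℝ} (hε : 0 < ε) :
    ∃ K : ℝ, ∀ m : ℕ, m ≠ 0 → ((quadrantPoints m).ncard : ℝ) ≤ K * (m : ℝ) ^ ε := by
  obtain ⟨K, hK⟩ := exists_ncard_gaussianNorm_eq_le_mul_rpow hε
  exact ⟨K, fun m hm ↦ (mod_cast ncard_quadrantPoints_le m : _ ≤ _).trans (hK m hm)⟩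

end Quadrant

section Approx

variable {n : ℕ} {X : Set (ℝ × ℝ)} {i j : ℤ}

lemma neg_mem_Ioo_div_of_mem_Ioo_div {x : ℝ} (hlt : (i : ℝ) / n < x) (hgt : x < ((i : ℝ) + 1) / n) :
    ((-1 - i : ℤ) : ℝ) / n < -x ∧ -x < (((-1 - i : ℤ) : ℝ) + 1) / n := by
  have hleft : ((-1 - i : ℤ) : ℝ) / n = -((i + 1) / n) := by push_cast; ring
  have hright : (((-1 - i : ℤ) : ℝ) + 1) / n = -(i / n) := by push_cast; ring
  rw [hleft, hright]
  exact ⟨neg_lt_neg hgt, neg_lt_neg hlt⟩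

lemma reflect_fst_mem_approx (hX : ∀ x y, (x, y) ∈ X → (-x, y) ∈ X) (h : (i, j) ∈ approx n X) :
    (-1 - i, j) ∈ approx n X := by
  obtain ⟨⟨x, y⟩, ⟨hx, hx', hy⟩, hxy⟩ := h
  obtain ⟨hneg, hneg'⟩ := neg_mem_Ioo_div_of_mem_Ioo_div hx hx'
  exact ⟨(-x, y), ⟨hneg, hneg', hy⟩, hX x y hxy⟩

lemma reflect_snd_mem_approx (hX : ∀ x y, (x, y) ∈ X → (x, -y) ∈ X) (h : (i, j) ∈ approx n X) :
    (i, -1 - j) ∈ approx n X := by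
  obtain ⟨⟨x, y⟩, ⟨hx, hx', hy, hy'⟩, hxy⟩ := h
  exact ⟨(x, -y), ⟨hx, hx', neg_mem_Ioo_div_of_mem_Ioo_div hy hy'⟩, hX x y hxy⟩

lemma ncard_eq_four_mul_of_reflect_mem {S : Set (ℤ × ℤ)}
    (hfst : ∀ i j, (i, j) ∈ S → (-1 - i, j) ∈ S) (hsnd : ∀ i j, (i, j) ∈ S → (i, -1 - j) ∈ S) :
    S.ncard = 4 * {q : ℕ × ℕ | ((q.1 : ℤ), (q.2 : ℤ)) ∈ S}.ncard := by
  let e : Bool × ℕ ≃ ℤ := (Equiv.boolProdEquivSum ℕ).trans Equiv.intEquivNatSumNat.symm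
  let f : (Bool × Bool) × ℕ × ℕ ≃ ℤ × ℤ := (Equiv.prodProdProdComm ..).trans (e.prodCongr e)
  have he_false (a : ℕ) : e (false, a) = a := rfl
  have he_true (a : ℕ) : e (true, a) = -1 - a := by
    change Int.negSucc a = _
    omega
  have hfst' (i j) : (-1 - i, j) ∈ S ↔ (i, j) ∈ S := ⟨fun h ↦ by simpa using hfst _ _ h, hfst i j⟩
  have hsnd' (i j) : (i, -1 - j) ∈ S ↔ (i, j) ∈ S := ⟨fun h ↦ by simpa using hsnd _ _ h, hsnd i j⟩
  have hpre : f ⁻¹' S = univ ×ˢ {q : ℕ × ℕ | ((q.1 : ℤ), (q.2 : ℤ)) ∈ S} := by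
    ext ⟨⟨s, t⟩, a, b⟩
    cases s <;> cases t <;> simp [f, he_false, he_true, hfst', hsnd']
  calc S.ncard = (f ⁻¹' S).ncard := by
        rw [← ncard_image_of_injective _ f.injective, f.image_preimage]
    _ = 4 * {q : ℕ × ℕ | ((q.1 : ℤ), (q.2 : ℤ)) ∈ S}.ncard := by
        rw [hpre, ncard_prod, ncard_univ]
        simp

lemma natCast_mem_approx_unitCircle_iff (hn : n ≠ 0) (a b : ℕ) :
    ((a : ℤ), (b : ℤ)) ∈ approx n unitCircle ↔ (a, b) ∈ quadrantBoxes (n ^ 2) := by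
  have hn₀ : (0 : ℝ) < n := mod_cast Nat.pos_of_ne_zero hn
  constructor
  · rintro ⟨⟨x, y⟩, ⟨hax, hxa, hby, hyb⟩, hxy : x ^ 2 + y ^ 2 = 1⟩
    simp only [Int.cast_natCast, div_lt_iff₀ hn₀, lt_div_iff₀ hn₀] at hax hxa hby hyb
    have hcircle : (x * n) ^ 2 + (y * n) ^ 2 = (n : ℝ) ^ 2 := by
      rw [mul_pow, mul_pow, ← add_mul, hxy, one_mul]
    have hx₀ : 0 ≤ x * n := (Nat.cast_nonneg a).trans hax.le
    have hy₀ : 0 ≤ y * n := (Nat.cast_nonneg b).trans hby.le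
    have hlower : (a : ℝ) ^ 2 + (b : ℝ) ^ 2 < (n : ℝ) ^ 2 := by rw [← hcircle]; gcongr
    have hupper : (n : ℝ) ^ 2 < ((a : ℝ) + 1) ^ 2 + ((b : ℝ) + 1) ^ 2 := by rw [← hcircle]; gcongr
    exact ⟨mod_cast hlower, mod_cast hupper⟩
  · rintro ⟨hlower, hupper⟩
    have hcont : Continuous fun t : ℝ ↦ ((a : ℝ) + t) ^ 2 + ((b : ℝ) + t) ^ 2 := by fun_prop
    have hmem : (n : ℝ) ^ 2 ∈ Ioo (((a : ℝ) + 0) ^ 2 + ((b : ℝ) + 0) ^ 2)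
        (((a : ℝ) + 1) ^ 2 + ((b : ℝ) + 1) ^ 2) := by
      rw [add_zero, add_zero]
      exact ⟨mod_cast hlower, mod_cast hupper⟩
    obtain ⟨t, ⟨ht₀, ht₁⟩, ht : (a + t) ^ 2 + (b + t) ^ 2 = (n : ℝ) ^ 2⟩ :=
      intermediate_value_Ioo zero_le_one hcont.continuousOn hmem
    have hbox (c : ℕ) : ((c : ℤ) : ℝ) / n < (c + t) / n ∧
        (c + t) / n < (((c : ℤ) : ℝ) + 1) / n := by
      rw [Int.cast_natCast]
      constructor <;> gcongr
      linarith
    refine ⟨((a + t) / n, (b + t) / n), ⟨(hbox a).1, (hbox a).2, hbox b⟩, ?_⟩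
    change ((a + t) / n) ^ 2 + ((b + t) / n) ^ 2 = 1
    rw [div_pow, div_pow, ← add_div, ht, div_self (by positivity)]

lemma ncard_approx_unitCircle (hn : n ≠ 0) :
    (approx n unitCircle).ncard + 4 * ((quadrantPoints (n ^ 2)).ncard + 1) = 8 * n := by
  have hfold : (approx n unitCircle).ncard = 4 * (quadrantBoxes (n ^ 2)).ncard := by
    rw [ncard_eq_four_mul_of_reflect_mem
      (fun _ _ ↦ reflect_fst_mem_approx (by simp [unitCircle]))
      (fun _ _ ↦ reflect_snd_mem_approx (by simp [unitCircle]))]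
    simp only [natCast_mem_approx_unitCircle_iff hn, Prod.mk.eta, ofPred_mem_eq]
  have hquadrant := ncard_quadrantBoxes_add_ncard_quadrantPoints (n ^ 2)
  rw [Nat.cast_pow, ncard_setOf_sq_lt_sq] at hquadrant
  omega

end Approx

theorem sq_card_approx_unitCircle (ε : ℝ) (hε : 0 < ε) :
    ∃ K : ℝ, ∀ n : ℕ, 1 ≤ n →
      |((approx n unitCircle).ncard : ℝ) ^ 2 - 64 * (n : ℝ) ^ 2| ≤ K * (n : ℝ) ^ (1 + ε) := by
  obtain ⟨K, hK⟩ := exists_ncard_quadrantPoints_le_mul_rpow (half_pos hε)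
  refine ⟨64 * (K + 1), fun n hn ↦ ?_⟩
  have hn₀ : n ≠ 0 := Nat.one_le_iff_ne_zero.1 hn
  have hAP : ((approx n unitCircle).ncard : ℝ) + 4 * ((quadrantPoints (n ^ 2)).ncard + 1) = 8 * n :=
    mod_cast ncard_approx_unitCircle hn₀
  set A : ℝ := ((approx n unitCircle).ncard : ℝ)
  set P : ℝ := ((quadrantPoints (n ^ 2)).ncard : ℝ)
  have hA₀ : 0 ≤ A := Nat.cast_nonneg _
  have hP₀ : 0 ≤ P := Nat.cast_nonneg _
  have hP : P ≤ K * (n : ℝ) ^ ε := by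
    rw [← natCast_sq_rpow_half]
    exact hK _ (pow_ne_zero 2 hn₀)
  have hone : 1 ≤ (n : ℝ) ^ ε := one_le_rpow (mod_cast hn) hε.le
  calc |A ^ 2 - 64 * (n : ℝ) ^ 2| = 4 * (P + 1) * (A + 8 * n) := by
        rw [← abs_neg, ← abs_of_nonneg (by positivity : 0 ≤ 4 * (P + 1) * (A + 8 * n))]
        congr 1
        linear_combination (-A - 8 * n) * hAP
    _ ≤ 4 * ((K + 1) * (n : ℝ) ^ ε) * (8 * n + 8 * n) := by gcongr <;> linarith
    _ = 64 * (K + 1) * (n : ℝ) ^ (1 + ε) := by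
        rw [rpow_one_add' n.cast_nonneg (by linarith)]
        ring
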